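/- arXiv:2604.03152 — 6 statements merged into one kernel-verified Lean document; each statement's English description precedes it below -/
import Mathlib

section
/- Let β > 1, let U be a finite universe of n ≥ 1 elements and F a finite family of subsets of U. Suppose each element e ∈ U is assigned to a set asn(e) ∈ F containing it, and for s ∈ F let cov(s) = {e ∈ U : asn(e) = s}. Suppose each set s with cov(s) ≠ ∅ is placed at an integer level lev(s) ∈ [0, ⌈log_β n⌉], and each e ∈ cov(s) is given level lev(e) = lev(s). Assume: (1) for every s ∈ F with cov(s) ≠ ∅, |cov(s)| ≥ β^{lev(s)}; and (2) for every s ∈ F and every natural number j ≤ log_β n, |{e ∈ s : lev(e) < j}| < β^j. Then C = {s ∈ F : cov(s) ≠ ∅} is a set cover of U, and for every subfamily {s_1, …, s_k} ⊆ F that covers U, |C| ≤ β·(ln n + 1)·k. -/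
/-!
Charge each chosen set `1`, shared equally among the elements it covers, so that the prices of all
elements add up to `|C|`. Within a set `s` of a competing cover, an element of level `l` has price
at most `β ^ (-l)` by (1), while fewer than `β ^ (l + 1)` elements of `s` have level at most `l`,
by (2) if `l + 1 ≤ log_β n` and because `|s| ≤ n` otherwise. Hence the element ranked `i`-th in `s`
by level has price at most `β / i`, and the prices in `s` add up to at most `β` times a harmonic
number.
-/

open Finset

section Prices

variable {ι κ γ δ K : Type*} [Field K] [LinearOrder K] [IsStrictOrderedRing K] [LinearOrder δ]

theorem sum_inv_card_fiber_eq_card_image [DecidableEq γ] (U : Finset ι) (g : ι → γ) :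
    ∑ i ∈ U, (#{j ∈ U | g j = g i} : K)⁻¹ = #(U.image g) := by
  calc ∑ i ∈ U, (#{j ∈ U | g j = g i} : K)⁻¹
      = ∑ c ∈ U.image g, #{j ∈ U | g j = c} • (#{j ∈ U | g j = c} : K)⁻¹ :=
        sum_comp (fun c => (#{j ∈ U | g j = c} : K)⁻¹) g
    _ = ∑ c ∈ U.image g, 1 := by
        refine sum_congr rfl fun c hc => ?_
        have hfiber : #{j ∈ U | g j = c} ≠ 0 :=
          (card_pos.2 (fiber_nonempty_iff_mem_image.2 hc)).ne'
        rw [nsmul_eq_mul, mul_inv_cancel₀ (Nat.cast_ne_zero.2 hfiber)]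
    _ = #(U.image g) := by rw [sum_const, nsmul_one]

theorem sum_le_sum_sum_of_cover {M : Type*} [AddCommMonoid M] [PartialOrder M]
    [IsOrderedAddMonoid M] {U : Finset ι} {D : Finset κ} {t : κ → Finset ι} {w : ι → M}
    (hw : ∀ k ∈ D, ∀ i ∈ t k, 0 ≤ w i) (hcover : ∀ i ∈ U, ∃ k ∈ D, i ∈ t k) :
    ∑ i ∈ U, w i ≤ ∑ k ∈ D, ∑ i ∈ t k, w i := by
  classical
  have hsub : U ⊆ (D.sigma t).image Sigma.snd := fun i hi => by
    obtain ⟨k, hk, hik⟩ := hcover i hi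
    exact mem_image.2 ⟨⟨k, i⟩, mem_sigma.2 ⟨hk, hik⟩, rfl⟩
  have hnonneg : ∀ i ∈ (D.sigma t).image Sigma.snd, 0 ≤ w i := by
    simp only [mem_image, mem_sigma]
    rintro _ ⟨⟨k, i⟩, ⟨hk, hik⟩, rfl⟩
    exact hw k hk i hik
  calc ∑ i ∈ U, w i ≤ ∑ i ∈ (D.sigma t).image Sigma.snd, w i :=
        sum_le_sum_of_subset_of_nonneg hsub fun i hi _ => hnonneg i hi
    _ ≤ ∑ p ∈ D.sigma t, w p.2 := sum_image_le_of_nonneg hnonneg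
    _ = ∑ k ∈ D, ∑ i ∈ t k, w i := sum_sigma _ _ _

theorem sum_le_mul_harmonic_card {s : Finset ι} {w : ι → K} {b : K} (r : ι → δ)
    (hw : ∀ i ∈ s, 0 ≤ w i) (hrank : ∀ i ∈ s, w i * #{j ∈ s | r j ≤ r i} ≤ b) :
    ∑ i ∈ s, w i ≤ b * harmonic #s := by
  classical
  induction s using Finset.induction_on_max_value r with
  | empty => simp
  | insert a s ha hmax ih =>
    have hrest : ∑ i ∈ s, w i ≤ b * harmonic #s := by
      refine ih (fun i hi => hw i (mem_insert_of_mem hi)) fun i hi => ?_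
      refine le_trans ?_ (hrank i (mem_insert_of_mem hi))
      gcongr
      · exact hw i (mem_insert_of_mem hi)
      · exact subset_insert a s
    have hall : {j ∈ insert a s | r j ≤ r a} = insert a s :=
      filter_true_of_mem (forall_mem_insert _ _ _ |>.2 ⟨le_rfl, hmax⟩)
    have hlast : w a ≤ b * (#s + 1 : K)⁻¹ := by
      rw [← div_eq_mul_inv, le_div_iff₀ (by positivity)]
      simpa only [hall, card_insert_of_notMem ha, Nat.cast_succ] using hrank a (mem_insert_self a s)
    calc ∑ i ∈ insert a s, w i = w a + ∑ i ∈ s, w i := sum_insert ha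
      _ ≤ b * (#s + 1 : K)⁻¹ + b * harmonic #s := add_le_add hlast hrest
      _ = b * harmonic #(insert a s) := by
        rw [card_insert_of_notMem ha, harmonic_succ]
        push_cast
        ring

theorem card_image_le_mul_sum_harmonic [DecidableEq γ] {U : Finset ι} {D : Finset κ}
    {t : κ → Finset ι} {b : K} (g : ι → γ) (r : ι → δ)
    (hcover : ∀ i ∈ U, ∃ k ∈ D, i ∈ t k)
    (hrank : ∀ k ∈ D, ∀ i ∈ t k, (#{j ∈ t k | r j ≤ r i} : K) ≤ b * #{j ∈ U | g j = g i}) :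
    (#(U.image g) : K) ≤ b * ∑ k ∈ D, (harmonic #(t k) : K) := by
  let price : ι → K := fun i => (#{j ∈ U | g j = g i} : K)⁻¹
  have hprice : ∀ i, 0 ≤ price i := fun i => inv_nonneg.2 (Nat.cast_nonneg _)
  have hprice_rank : ∀ k ∈ D, ∀ i ∈ t k, price i * #{j ∈ t k | r j ≤ r i} ≤ b := by
    intro k hk i hi
    have hcount : (0 : K) < #{j ∈ t k | r j ≤ r i} :=
      Nat.cast_pos.2 (card_pos.2 ⟨i, mem_filter.2 ⟨hi, le_rfl⟩⟩)
    have hfiber : (0 : K) < #{j ∈ U | g j = g i} :=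
      (Nat.cast_nonneg _).lt_of_ne' (right_ne_zero_of_mul (hcount.trans_le (hrank k hk i hi)).ne')
    rw [inv_mul_le_iff₀ hfiber, mul_comm]
    exact hrank k hk i hi
  calc (#(U.image g) : K) = ∑ i ∈ U, price i := (sum_inv_card_fiber_eq_card_image U g).symm
    _ ≤ ∑ k ∈ D, ∑ i ∈ t k, price i := sum_le_sum_sum_of_cover (fun _ _ i _ => hprice i) hcover
    _ ≤ ∑ k ∈ D, b * (harmonic #(t k) : K) := sum_le_sum fun k hk =>
        sum_le_mul_harmonic_card r (fun i _ => hprice i) (hprice_rank k hk)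
    _ = b * ∑ k ∈ D, (harmonic #(t k) : K) := (mul_sum _ _ _).symm

end Prices

theorem harmonic_monotone : Monotone harmonic :=
  monotone_nat_of_le_succ fun n => by
    rw [harmonic_succ]
    exact le_add_of_nonneg_right (by positivity)

theorem harmonic_le_one_add_log_of_le {m n : ℕ} (h : m ≤ n) :
    (harmonic m : ℝ) ≤ 1 + Real.log n :=
  (Rat.cast_le.2 (harmonic_monotone h)).trans (harmonic_le_one_add_log n)

theorem lt_pow_of_logb_lt {b x : ℝ} {n : ℕ} (hb : 1 < b) (h : Real.logb b x < n) : x < b ^ n :=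
  Real.lt_pow_of_log_lt (zero_lt_one.trans hb) ((div_lt_iff₀ (Real.log_pos hb)).1 h)

theorem card_filter_lt_level_lt_pow {α : Type*} {β : ℝ} (hβ : 1 < β) {s U : Finset α}
    (hsU : s ⊆ U) {l : α → ℕ}
    (hsparse : ∀ j : ℕ, (j : ℝ) ≤ Real.logb β #U → (#{e ∈ s | l e < j} : ℝ) < β ^ j) (j : ℕ) :
    (#{e ∈ s | l e < j} : ℝ) < β ^ j := by
  obtain hj | hj := le_or_gt (j : ℝ) (Real.logb β #U)
  · exact hsparse j hj
  · calc (#{e ∈ s | l e < j} : ℝ) ≤ #U :=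
          Nat.cast_le.2 (card_le_card ((filter_subset _ _).trans hsU))
      _ < β ^ j := lt_pow_of_logb_lt hβ hj

/-- Let `β > 1`, let `U` be a finite universe of `n ≥ 1` elements and `F`
a finite family of subsets of `U`. Each element `e ∈ U` is assigned to a set `asn e ∈ F`
containing it, and `cov s = {e ∈ U : asn e = s}`. Each set `s` with `cov s ≠ ∅` is placed
at an integer level `lev s ∈ [0, ⌈log_β n⌉]` and each `e ∈ cov s` has `lev e = lev s`
(i.e. `lev (asn e)`). Assuming (1) `|cov s| ≥ β ^ lev s` for every `s` with nonempty `cov`,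
and (2) `|{e ∈ s : lev e < j}| < β ^ j` for every `s ∈ F` and every natural `j ≤ log_β n`,
the collection `C = {s ∈ F : cov s ≠ ∅}` is a set cover of `U`, and for every subfamily of
`F` covering `U` of size `k`, `|C| ≤ β·(ln n + 1)·k`. -/
theorem stmt_0 {α : Type*} [DecidableEq α] (β : ℝ) (hβ : 1 < β)
    (U : Finset α) (F : Finset (Finset α)) (hn : 1 ≤ U.card)
    (hF : ∀ s ∈ F, s ⊆ U)
    (asn : α → Finset α)
    (hasn_mem : ∀ e ∈ U, asn e ∈ F) (hasn_in : ∀ e ∈ U, e ∈ asn e)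
    (lev : Finset α → ℕ)
    (hlev_ub : ∀ s ∈ F, (U.filter (fun e => asn e = s)).Nonempty →
      lev s ≤ ⌈Real.logb β (U.card : ℝ)⌉₊)
    (h1 : ∀ s ∈ F, (U.filter (fun e => asn e = s)).Nonempty →
      β ^ (lev s) ≤ ((U.filter (fun e => asn e = s)).card : ℝ))
    (h2 : ∀ s ∈ F, ∀ j : ℕ, (j : ℝ) ≤ Real.logb β (U.card : ℝ) →
      ((s.filter (fun e => lev (asn e) < j)).card : ℝ) < β ^ j)
    (C : Finset (Finset α))
    (hC : C = F.filter (fun s => (U.filter (fun e => asn e = s)).Nonempty)) :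
    (C ⊆ F ∧ ∀ e ∈ U, ∃ s ∈ C, e ∈ s) ∧
    (∀ C' : Finset (Finset α), C' ⊆ F → (∀ e ∈ U, ∃ s ∈ C', e ∈ s) →
      (C.card : ℝ) ≤ β * (Real.log (U.card : ℝ) + 1) * C'.card) := by
  have hC_image : C = U.image asn := by
    simp only [hC, fiber_nonempty_iff_mem_image]
    exact filter_mem_eq_inter.trans (inter_eq_right.2 (image_subset_iff.2 hasn_mem))
  refine ⟨⟨hC ▸ filter_subset _ _, fun e he =>
    ⟨asn e, hC_image ▸ mem_image_of_mem asn he, hasn_in e he⟩⟩, fun C' hC' hcover => ?_⟩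
  have hβ0 : 0 < β := zero_lt_one.trans hβ
  have hrank : ∀ s ∈ C', ∀ e ∈ s,
      (#{x ∈ s | lev (asn x) ≤ lev (asn e)} : ℝ) ≤ β * #{x ∈ U | asn x = asn e} := by
    intro s hs e he
    have hsU := hF s (hC' hs)
    calc (#{x ∈ s | lev (asn x) ≤ lev (asn e)} : ℝ)
        = #{x ∈ s | lev (asn x) < lev (asn e) + 1} := by simp only [Nat.lt_succ_iff]
      _ ≤ β ^ (lev (asn e) + 1) := (card_filter_lt_level_lt_pow hβ hsU (h2 s (hC' hs)) _).le
      _ = β * β ^ lev (asn e) := pow_succ' _ _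
      _ ≤ β * #{x ∈ U | asn x = asn e} := mul_le_mul_of_nonneg_left
          (h1 _ (hasn_mem e (hsU he)) ⟨e, mem_filter.2 ⟨hsU he, rfl⟩⟩) hβ0.le
  calc (#C : ℝ) ≤ β * ∑ s ∈ C', (harmonic #s : ℝ) :=
        hC_image ▸ card_image_le_mul_sum_harmonic asn (fun e => lev (asn e)) hcover hrank
    _ ≤ β * ∑ s ∈ C', (1 + Real.log #U) := by
        gcongr with s hs
        exact harmonic_le_one_add_log_of_le (card_le_card (hF s (hC' hs)))
    _ = β * (Real.log #U + 1) * #C' := by rw [sum_const, nsmul_eq_mul]; ring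
end

section
/- Let β > 1, let U be a finite universe of n ≥ 1 elements, let F be a finite family of subsets of U, and let lev assign a natural-number level lev(e) to each element e ∈ U such that for every s ∈ F and every natural number j ≤ log_β n one has |{e ∈ s : lev(e) < j}| < β^j. Fix s ∈ F with |s| = x and enumerate its elements e_1, e_2, …, e_x so that lev(e_1) ≥ lev(e_2) ≥ … ≥ lev(e_x). Then for every index j ∈ {1, …, x}, β^{-lev(e_j)} ≤ β/(x - j + 1). -/
/-! The `x - j` elements `e j, …, e (x - 1)` of `s` all have level at most `lev (e j)`, so the bound
on the number of elements of level below `lev (e j) + 1` gives `x - j < β ^ (lev (e j) + 1)`. That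
bound holds at every level `k`: if `k > log_β n`, then `β ^ k` already exceeds `n ≥ |s|`. -/

open Finset

theorem card_Ici_le_card_filter_le {ι α γ : Type*} [Preorder ι] [LocallyFiniteOrderTop ι]
    [Preorder γ] [DecidableLE γ] {s : Finset α} {f : α → γ} {e : ι → α} (he : ∀ i, e i ∈ s)
    (hinj : Function.Injective e) (hanti : Antitone (f ∘ e)) (j : ι) :
    #(Ici j) ≤ #{a ∈ s | f a ≤ f (e j)} :=
  card_le_card_of_injOn e
    (fun i hi => mem_coe.mpr <| mem_filter.mpr ⟨he i, hanti (mem_Ici.mp hi)⟩) hinj.injOn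

theorem lt_rpow_of_le_logb_imp_lt {b x y t : ℝ} (hb : 1 < b) (hx : 0 < x) (hyx : y ≤ x)
    (h : t ≤ Real.logb b x → y < b ^ t) : y < b ^ t := by
  rcases le_or_gt t (Real.logb b x) with ht | ht
  · exact h ht
  · exact hyx.trans_lt ((Real.logb_lt_iff_lt_rpow hb hx).mp ht)

theorem zpow_neg_lt_div_sub_of_card_filter_lt_pow {K α : Type*} [Field K] [LinearOrder K]
    [IsStrictOrderedRing K] {b : K} {s : Finset α} {lev : α → ℕ}
    (hlev : ∀ k, (#{a ∈ s | lev a < k} : K) < b ^ k) {m : ℕ} {e : Fin m → α} (he : ∀ i, e i ∈ s)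
    (hinj : Function.Injective e) (hanti : Antitone (lev ∘ e)) (j : Fin m) :
    b ^ (-(lev (e j) : ℤ)) < b / ((m : K) - (j : ℕ)) := by
  have hb : 0 < b := by simpa only [pow_one] using (Nat.cast_nonneg _).trans_lt (hlev 1)
  have hj : 0 < (m : K) - (j : ℕ) := sub_pos.mpr (Nat.cast_lt.mpr j.isLt)
  have htail : (m : K) - (j : ℕ) < b ^ (lev (e j) + 1) :=
    calc (m : K) - (j : ℕ) = #(Ici j) := by rw [Fin.card_Ici, Nat.cast_sub j.isLt.le]
      _ ≤ #{a ∈ s | lev a ≤ lev (e j)} :=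
        Nat.cast_le.mpr (card_Ici_le_card_filter_le he hinj hanti j)
      _ < b ^ (lev (e j) + 1) := by simpa only [Nat.lt_succ_iff] using hlev (lev (e j) + 1)
  rwa [zpow_neg, zpow_natCast, lt_div_iff₀ hj, inv_mul_lt_iff₀ (pow_pos hb _), ← pow_succ]

/-- Let `β > 1`, `U` a finite universe of `n ≥ 1` elements, `F` a finite
family of subsets of `U`, and `lev : α → ℕ` a level function such that for every `s ∈ F`
and every natural `j ≤ log_β n`, `|{e ∈ s : lev e < j}| < β ^ j`. Fix `s ∈ F` with
`|s| = x` and enumerate its elements `e₀, …, e_{x-1}` (0-indexed) with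
`lev (e 0) ≥ lev (e 1) ≥ …`. Then for every index `j`, `β ^ (-lev (e j)) ≤ β / (x - j)`
(with 0-indexing, `x - j` here equals the 1-indexed `x - j + 1`). -/
theorem stmt_1 {α : Type*} [DecidableEq α] (β : ℝ) (hβ : 1 < β)
    (U : Finset α) (F : Finset (Finset α)) (hn : 1 ≤ U.card)
    (hF : ∀ s ∈ F, s ⊆ U)
    (lev : α → ℕ)
    (h2 : ∀ s ∈ F, ∀ j : ℕ, (j : ℝ) ≤ Real.logb β (U.card : ℝ) →
      ((s.filter (fun e => lev e < j)).card : ℝ) < β ^ j)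
    (s : Finset α) (hs : s ∈ F)
    (e : Fin s.card → α) (he : ∀ i, e i ∈ s) (hinj : Function.Injective e)
    (hsorted : ∀ i i' : Fin s.card, i ≤ i' → lev (e i') ≤ lev (e i)) :
    ∀ j : Fin s.card, β ^ (-(lev (e j) : ℤ)) ≤ β / ((s.card : ℝ) - (j : ℕ)) := by
  have hU : (0 : ℝ) < #U := Nat.cast_pos.mpr hn
  have hlev (k : ℕ) : (#{a ∈ s | lev a < k} : ℝ) < β ^ k := by
    have hsub : #{a ∈ s | lev a < k} ≤ #U := card_le_card ((filter_subset _ s).trans (hF s hs))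
    rw [← Real.rpow_natCast]
    refine lt_rpow_of_le_logb_imp_lt hβ hU (Nat.cast_le.mpr hsub) ?_
    simpa only [Real.rpow_natCast] using h2 s hs k
  exact fun j => (zpow_neg_lt_div_sub_of_card_filter_lt_pow hlev he hinj hsorted j).le
end

section
/- Let β > 1, let U be a finite universe of n ≥ 1 elements, let F be a finite family of subsets of U, and let lev assign a natural-number level lev(e) to each element e ∈ U such that for every s ∈ F and every natural number j ≤ log_β n one has |{e ∈ s : lev(e) < j}| < β^j. Then for every s ∈ F, the sum Σ_{e ∈ s} β^{-lev(e)} is at most β·H_{|s|}, where H_x = 1 + 1/2 + … + 1/x is the x-th harmonic number; in particular Σ_{e ∈ s} β^{-lev(e)} ≤ β·(ln n + 1). -/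
/-!
Order the elements of `s` by increasing level. The `k`-th one has at least `k` elements of `s` at
its level `l` or below, and there are at most `β ^ (l + 1)` of those, so its weight `β ^ (-l)` is
at most `β / k`; summing over `k` gives `β * H_{|s|}`. The level bound is available for every `l`,
since `β ^ (l + 1) > n ≥ |s|` once `l + 1 > log_β n`.
-/

open Finset

theorem cast_harmonic_eq_sum_range {K : Type*} [DivisionRing K] [CharZero K]
    (n : ℕ) : (harmonic n : K) = ∑ i ∈ range n, (1 : K) / (i + 1) := by
  simp [harmonic]

theorem cast_harmonic_le_log_add_one {m n : ℕ} (hmn : m ≤ n) :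
    (harmonic m : ℝ) ≤ Real.log n + 1 :=
  calc (harmonic m : ℝ) ≤ harmonic n := mod_cast harmonic_monotone hmn
    _ ≤ 1 + Real.log n := harmonic_le_one_add_log n
    _ = Real.log n + 1 := add_comm _ _

section WeightedSums

variable {α K : Type*} [Field K] [LinearOrder K] [IsStrictOrderedRing K]

theorem sum_le_mul_harmonic_card_s2 {ι : Type*} [LinearOrder ι] (rank : α → ι) (w : α → K) {c : K}
    (hc : 0 ≤ c) (s : Finset α) (hw : ∀ e ∈ s, w e ≤ c / #{x ∈ s | rank x ≤ rank e}) :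
    ∑ e ∈ s, w e ≤ c * harmonic #s := by
  classical
  induction s using Finset.induction_on_max_value rank with
  | empty => simp
  | insert a s ha hmax ih =>
    have hw_s : ∀ e ∈ s, w e ≤ c / #{x ∈ s | rank x ≤ rank e} := fun e he => by
      have hpos : 0 < #{x ∈ s | rank x ≤ rank e} := card_pos.2 ⟨e, by simp [he]⟩
      refine (hw e (mem_insert_of_mem he)).trans ?_
      gcongr
      exact subset_insert a s
    have hw_a : w a ≤ c * ((#s : K) + 1)⁻¹ := by
      have hall : {x ∈ insert a s | rank x ≤ rank a} = insert a s :=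
        filter_true_of_mem (by simpa using hmax)
      simpa [hall, ha, div_eq_mul_inv] using hw a (mem_insert_self a s)
    calc ∑ e ∈ insert a s, w e = ∑ e ∈ s, w e + w a := by rw [sum_insert ha, add_comm]
      _ ≤ c * harmonic #s + c * ((#s : K) + 1)⁻¹ := add_le_add (ih hw_s) hw_a
      _ = c * harmonic #(insert a s) := by
        rw [card_insert_of_notMem ha, harmonic_succ]
        push_cast
        ring

theorem sum_zpow_neg_le_mul_harmonic_card {β : K} (hβ : 0 < β) (lev : α → ℤ) (s : Finset α)
    (hlev : ∀ e ∈ s, (#{x ∈ s | lev x ≤ lev e} : K) ≤ β ^ (lev e + 1)) :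
    ∑ e ∈ s, β ^ (-lev e) ≤ β * harmonic #s := by
  refine sum_le_mul_harmonic_card_s2 lev _ hβ.le s fun e he => ?_
  have hpos : 0 < #{x ∈ s | lev x ≤ lev e} := card_pos.2 ⟨e, by simp [he]⟩
  calc β ^ (-lev e) = β / β ^ (lev e + 1) := by
        rw [zpow_neg, zpow_add_one₀ hβ.ne']
        field_simp
    _ ≤ β / #{x ∈ s | lev x ≤ lev e} := by
        gcongr
        exact hlev e he

end WeightedSums

theorem le_pow_of_le_logb_imp {β x n : ℝ} (hβ : 1 < β) (hn : 0 < n) (hx : x ≤ n) {j : ℕ}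
    (h : j ≤ Real.logb β n → x ≤ β ^ j) : x ≤ β ^ j := by
  rcases le_or_gt (j : ℝ) (Real.logb β n) with hj | hj
  · exact h hj
  · rw [Real.logb_lt_iff_lt_rpow hβ hn, Real.rpow_natCast] at hj
    exact hx.trans hj.le

/-- Let `β > 1`, `U` a finite universe of `n ≥ 1` elements, `F` a finite
family of subsets of `U`, and `lev : α → ℕ` a level function such that for every `s ∈ F`
and every natural `j ≤ log_β n`, `|{e ∈ s : lev e < j}| < β ^ j`. Then for every `s ∈ F`,
`∑_{e ∈ s} β ^ (-lev e) ≤ β · H_{|s|}`, where `H_x = ∑_{i=1}^{x} 1/i` is the `x`-th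
harmonic number; in particular the sum is at most `β · (ln n + 1)`. -/
theorem stmt_2 {α : Type*} [DecidableEq α] (β : ℝ) (hβ : 1 < β)
    (U : Finset α) (F : Finset (Finset α)) (hn : 1 ≤ U.card)
    (hF : ∀ s ∈ F, s ⊆ U)
    (lev : α → ℕ)
    (h2 : ∀ s ∈ F, ∀ j : ℕ, (j : ℝ) ≤ Real.logb β (U.card : ℝ) →
      ((s.filter (fun e => lev e < j)).card : ℝ) < β ^ j) :
    ∀ s ∈ F,
      (∑ e ∈ s, β ^ (-(lev e : ℤ)) ≤ β * ∑ i ∈ Finset.range s.card, (1 : ℝ) / (i + 1)) ∧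
      (∑ e ∈ s, β ^ (-(lev e : ℤ)) ≤ β * (Real.log (U.card : ℝ) + 1)) := by
  intro s hs
  have hsU : #s ≤ #U := card_le_card (hF s hs)
  have hlt (j : ℕ) : (#{x ∈ s | lev x < j} : ℝ) ≤ β ^ j :=
    le_pow_of_le_logb_imp hβ (Nat.cast_pos.2 hn)
      (Nat.cast_le.2 ((card_filter_le s _).trans hsU)) fun hj => (h2 s hs j hj).le
  have hle (e : α) : (#{x ∈ s | (lev x : ℤ) ≤ lev e} : ℝ) ≤ β ^ ((lev e : ℤ) + 1) := by
    have h := hlt (lev e + 1)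
    simp only [Nat.lt_succ_iff] at h
    exact_mod_cast h
  have hsum : ∑ e ∈ s, β ^ (-(lev e : ℤ)) ≤ β * harmonic #s :=
    sum_zpow_neg_le_mul_harmonic_card (by positivity) _ s fun e _ => hle e
  refine ⟨hsum.trans_eq (by rw [cast_harmonic_eq_sum_range]), hsum.trans ?_⟩
  gcongr
  exact cast_harmonic_le_log_add_one hsU
end

section
/- Let 1 < β < 2, let U be a finite universe of n ≥ 1 elements and F a finite family of subsets of U. Suppose an assignment asn and levels lev as in the robustness setting satisfy: (1) |cov(s)| ≥ β^{lev(s)} for every s with cov(s) ≠ ∅, and (2) |{e ∈ s : lev(e) < j}| < β^j for every s ∈ F and every natural number j ≤ log_β n, and let C = {s ∈ F : cov(s) ≠ ∅}. Let D ⊆ U with |D| ≤ (β - 1)·|C|, let U' be a universe with U \ D ⊆ U', and let C' ⊆ F be any set cover of U' with |C'| ≤ β·|C|. Then for every set cover C'' ⊆ F of U', |C'| ≤ (β²/(2 - β))·(ln n + 1)·|C''|; that is, C' is a (β²/(2 - β))·(ln n + 1)-approximate set cover of U'. -/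
/-!
Charge every set of `C` one unit and let the elements assigned to it share the charge equally, so
that the total charge is `|C|`. By (1) an element at level `i` pays at most `β ^ (-i)`, and by (2)
at most `β ^ (i + 1)` elements of a set `s ∈ F` lie at level `i` or below. So an element of `s` pays
at most `β` over its rank by level in `s`, and `s` pays at most `β H_{|s|} ≤ β (ln n + 1)` in total.
The deleted elements pay at most `|D| ≤ (β - 1) |C|`, and the rest of `U` is covered by `C''`,
whence `(2 - β) |C| ≤ β (ln n + 1) |C''|`.
-/

namespace SetCover

open Finset

variable {α ι : Type*}

theorem sum_biUnion_le [DecidableEq α] {M : Type*} [AddCommMonoid M] [Preorder M]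
    [IsOrderedAddMonoid M] {w : α → M} (hw : ∀ e, 0 ≤ w e) (I : Finset ι) (t : ι → Finset α) :
    ∑ e ∈ I.biUnion t, w e ≤ ∑ i ∈ I, ∑ e ∈ t i, w e := by
  have sum_union_le {s t : Finset α} : ∑ e ∈ s ∪ t, w e ≤ ∑ e ∈ s, w e + ∑ e ∈ t, w e :=
    sum_union_inter (f := w) ▸ le_add_of_nonneg_right (sum_nonneg fun e _ => hw e)
  rw [← sup_eq_biUnion]
  exact apply_sup_le_sum (f := fun s => ∑ e ∈ s, w e) sum_empty sum_union_le I

theorem sum_inv_rank_le_harmonic {K γ : Type*} [Field K] [LinearOrder K] [IsStrictOrderedRing K]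
    [LinearOrder γ] (r : α → γ) (s : Finset α) :
    ∑ e ∈ s, (#{x ∈ s | r x ≤ r e} : K)⁻¹ ≤ harmonic #s := by
  classical
  induction s using induction_on_max_value r with
  | empty => simp
  | insert a s ha hmax ih =>
    have rank_a : {x ∈ insert a s | r x ≤ r a} = insert a s :=
      filter_true_of_mem (forall_mem_insert _ _ _ |>.2 ⟨le_rfl, hmax⟩)
    have rank_mono : ∀ e ∈ s,
        (#{x ∈ insert a s | r x ≤ r e} : K)⁻¹ ≤ (#{x ∈ s | r x ≤ r e} : K)⁻¹ := by
      intro e he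
      have : 0 < #{x ∈ s | r x ≤ r e} := card_pos.2 ⟨e, mem_filter.2 ⟨he, le_rfl⟩⟩
      gcongr
      exact subset_insert a s
    rw [sum_insert ha, rank_a, card_insert_of_notMem ha, harmonic_succ, add_comm, Rat.cast_add,
      Rat.cast_inv, Rat.cast_natCast]
    gcongr
    exact (sum_le_sum rank_mono).trans ih

theorem harmonic_le_log_add_one {m n : ℕ} (h : m ≤ n) : (harmonic m : ℝ) ≤ Real.log n + 1 := by
  obtain rfl | hm := m.eq_zero_or_pos
  · simpa using add_nonneg (Real.log_natCast_nonneg n) zero_le_one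
  · calc (harmonic m : ℝ) ≤ 1 + Real.log m := harmonic_le_one_add_log m
      _ ≤ 1 + Real.log n := by gcongr
      _ = Real.log n + 1 := add_comm _ _

section Price

variable [DecidableEq ι]

/-- The share of `e` when every fiber of the assignment `f` on `U` carries a unit cost that its
elements split equally. -/
noncomputable def price (U : Finset α) (f : α → ι) (e : α) : ℝ :=
  (#{x ∈ U | f x = f e} : ℝ)⁻¹

theorem price_nonneg (U : Finset α) (f : α → ι) (e : α) : 0 ≤ price U f e :=
  inv_nonneg.2 (Nat.cast_nonneg _)

theorem price_le_one (U : Finset α) (f : α → ι) (e : α) : price U f e ≤ 1 :=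
  Nat.cast_inv_le_one _

theorem sum_price_eq_card_image (U : Finset α) (f : α → ι) :
    ∑ e ∈ U, price U f e = #(U.image f) := by
  have sum_fiber : ∀ e ∈ U, 1 = ∑ x ∈ U with f x = f e, price U f x := by
    intro e he
    have card_ne_zero : (#{x ∈ U | f x = f e} : ℝ) ≠ 0 :=
      Nat.cast_ne_zero.2 (card_ne_zero_of_mem (mem_filter.2 ⟨he, rfl⟩))
    have price_eq : ∀ x ∈ U.filter (f · = f e), price U f x = price U f e := by
      intro x hx
      rw [price, price, (mem_filter.1 hx).2]
    rw [sum_congr rfl price_eq, sum_const, nsmul_eq_mul, price, mul_inv_cancel₀ card_ne_zero]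
  rw [← sum_image' (f := fun _ => 1) _ sum_fiber, sum_const, nsmul_one]

theorem card_image_le_card_add_sum_price [DecidableEq α] {U D : Finset α} {S : Finset (Finset α)}
    (f : α → ι) (hS : ∀ e ∈ U \ D, ∃ s ∈ S, e ∈ s) :
    (#(U.image f) : ℝ) ≤ #D + ∑ s ∈ S, ∑ e ∈ s, price U f e := by
  have sum_inter : ∑ e ∈ U ∩ D, price U f e ≤ #D :=
    calc ∑ e ∈ U ∩ D, price U f e ≤ #(U ∩ D) • (1 : ℝ) :=
          sum_le_card_nsmul _ _ _ fun e _ => price_le_one U f e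
      _ = #(U ∩ D) := nsmul_one _
      _ ≤ #D := by gcongr; exact inter_subset_right
  have sum_sdiff : ∑ e ∈ U \ D, price U f e ≤ ∑ s ∈ S, ∑ e ∈ s, price U f e :=
    calc ∑ e ∈ U \ D, price U f e ≤ ∑ e ∈ S.biUnion id, price U f e :=
          sum_le_sum_of_subset_of_nonneg (fun e he => mem_biUnion.2 (hS e he))
            fun e _ _ => price_nonneg U f e
      _ ≤ ∑ s ∈ S, ∑ e ∈ s, price U f e := sum_biUnion_le (price_nonneg U f) S id
  rw [← sum_price_eq_card_image, ← sum_inter_add_sum_sdiff U D]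
  exact add_le_add sum_inter sum_sdiff

end Price

section Levels

variable {s : Finset α} {ℓ : α → ℕ} {β : ℝ}

theorem sum_price_le_mul_harmonic [DecidableEq ι] {U : Finset α} {f : α → ι} (hβ : 0 < β)
    (hfiber : ∀ e ∈ s, β ^ ℓ e ≤ #{x ∈ U | f x = f e})
    (hlow : ∀ j, (#{x ∈ s | ℓ x < j} : ℝ) ≤ β ^ j) :
    ∑ e ∈ s, price U f e ≤ β * harmonic #s := by
  have price_le : ∀ e ∈ s, price U f e ≤ β * (#{x ∈ s | ℓ x ≤ ℓ e} : ℝ)⁻¹ := by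
    intro e he
    have rank_pos : 0 < #{x ∈ s | ℓ x ≤ ℓ e} := card_pos.2 ⟨e, mem_filter.2 ⟨he, le_rfl⟩⟩
    have rank_le : (#{x ∈ s | ℓ x ≤ ℓ e} : ℝ) ≤ β ^ (ℓ e + 1) := by
      simpa only [Nat.lt_succ_iff] using hlow (ℓ e + 1)
    calc price U f e ≤ (β ^ ℓ e)⁻¹ := inv_anti₀ (by positivity) (hfiber e he)
      _ = β * (β ^ (ℓ e + 1))⁻¹ := by rw [pow_succ]; field_simp
      _ ≤ β * (#{x ∈ s | ℓ x ≤ ℓ e} : ℝ)⁻¹ := by gcongr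
  calc ∑ e ∈ s, price U f e ≤ ∑ e ∈ s, β * (#{x ∈ s | ℓ x ≤ ℓ e} : ℝ)⁻¹ := sum_le_sum price_le
    _ = β * ∑ e ∈ s, (#{x ∈ s | ℓ x ≤ ℓ e} : ℝ)⁻¹ := (mul_sum _ _ _).symm
    _ ≤ β * harmonic #s := by
      gcongr
      exact sum_inv_rank_le_harmonic ℓ s

theorem card_level_lt_le_pow {n : ℕ} (hβ : 1 < β) (hs : #s ≤ n)
    (h : ∀ j : ℕ, (j : ℝ) ≤ Real.logb β n → (#{x ∈ s | ℓ x < j} : ℝ) ≤ β ^ j) (j : ℕ) :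
    (#{x ∈ s | ℓ x < j} : ℝ) ≤ β ^ j := by
  obtain hn | hn := le_total (n : ℝ) (β ^ j)
  · calc (#{x ∈ s | ℓ x < j} : ℝ) ≤ #s := by gcongr; exact filter_subset _ s
      _ ≤ n := by gcongr
      _ ≤ β ^ j := hn
  · have n_pos : (0 : ℝ) < n := (pow_pos (zero_lt_one.trans hβ) j).trans_le hn
    exact h j ((Real.le_logb_iff_rpow_le hβ n_pos).2 (by rwa [Real.rpow_natCast]))

theorem sum_price_le_mul_log_add_one [DecidableEq ι] {U : Finset α} {f : α → ι} (hβ : 1 < β)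
    (hsU : s ⊆ U) (hfiber : ∀ e ∈ s, β ^ ℓ e ≤ #{x ∈ U | f x = f e})
    (hlow : ∀ j : ℕ, (j : ℝ) ≤ Real.logb β #U → (#{x ∈ s | ℓ x < j} : ℝ) ≤ β ^ j) :
    ∑ e ∈ s, price U f e ≤ β * (Real.log #U + 1) := by
  have hβ₀ : 0 < β := zero_lt_one.trans hβ
  have card_le : #s ≤ #U := card_le_card hsU
  calc ∑ e ∈ s, price U f e ≤ β * harmonic #s :=
        sum_price_le_mul_harmonic hβ₀ hfiber (card_level_lt_le_pow hβ card_le hlow)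
    _ ≤ β * (Real.log #U + 1) := by
      gcongr
      exact harmonic_le_log_add_one card_le

end Levels

theorem filter_fiber_nonempty_eq_image [DecidableEq ι] {U : Finset α} {F : Finset ι} {f : α → ι}
    (hf : ∀ e ∈ U, f e ∈ F) : {s ∈ F | {e ∈ U | f e = s}.Nonempty} = U.image f := by
  ext s
  simp only [mem_filter, mem_image, filter_nonempty_iff]
  exact ⟨And.right, fun h => ⟨by obtain ⟨e, he, rfl⟩ := h; exact hf e he, h⟩⟩

end SetCover

/-- approximation guarantee of the "robust" algorithm, Claim 5 of the
paper. Let `1 < β < 2`, `U` a finite universe of `n ≥ 1` elements and `F` a finite family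
of subsets of `U`, with an assignment `asn`, covers `cov s = {e ∈ U : asn e = s}`, and
levels `lev s ∈ [0, ⌈log_β n⌉]` for sets with nonempty `cov` (elements inheriting
`lev e = lev (asn e)`), satisfying
(1) `|cov s| ≥ β ^ lev s` for every `s` with `cov s ≠ ∅`, and
(2) `|{e ∈ s : lev e < j}| < β ^ j` for every `s ∈ F` and natural `j ≤ log_β n`;
let `C = {s ∈ F : cov s ≠ ∅}`. Let `D ⊆ U` with `|D| ≤ (β - 1)·|C|`, let `U'` be a
universe containing `U \ D`, and let `C' ⊆ F` be any set cover of `U'` with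
`|C'| ≤ β·|C|`. Then for every set cover `C'' ⊆ F` of `U'` we have
`|C'| ≤ (β²/(2 - β))·(ln n + 1)·|C''|`, i.e. `C'` is a
`(β²/(2 - β))·(ln n + 1)`-approximate set cover of `U'`. -/
theorem stmt_6 {α : Type*} [DecidableEq α] (β : ℝ) (hβ : 1 < β) (hβ2 : β < 2)
    (U : Finset α) (F : Finset (Finset α)) (hn : 1 ≤ U.card)
    (hF : ∀ s ∈ F, s ⊆ U)
    (asn : α → Finset α)
    (hasn_mem : ∀ e ∈ U, asn e ∈ F) (hasn_in : ∀ e ∈ U, e ∈ asn e)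
    (lev : Finset α → ℕ)
    (hlev_ub : ∀ s ∈ F, (U.filter (fun e => asn e = s)).Nonempty →
      lev s ≤ ⌈Real.logb β (U.card : ℝ)⌉₊)
    (h1 : ∀ s ∈ F, (U.filter (fun e => asn e = s)).Nonempty →
      β ^ (lev s) ≤ ((U.filter (fun e => asn e = s)).card : ℝ))
    (h2 : ∀ s ∈ F, ∀ j : ℕ, (j : ℝ) ≤ Real.logb β (U.card : ℝ) →
      ((s.filter (fun e => lev (asn e) < j)).card : ℝ) < β ^ j)
    (C : Finset (Finset α))
    (hC : C = F.filter (fun s => (U.filter (fun e => asn e = s)).Nonempty))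
    (D : Finset α) (hDsub : D ⊆ U) (hDcard : (D.card : ℝ) ≤ (β - 1) * C.card)
    (U' : Finset α) (hU' : U \ D ⊆ U')
    (C' : Finset (Finset α)) (hC'sub : C' ⊆ F)
    (hC'cover : ∀ e ∈ U', ∃ s ∈ C', e ∈ s)
    (hC'size : (C'.card : ℝ) ≤ β * C.card) :
    ∀ C'' : Finset (Finset α), C'' ⊆ F → (∀ e ∈ U', ∃ s ∈ C'', e ∈ s) →
      (C'.card : ℝ) ≤ (β ^ 2 / (2 - β)) * (Real.log (U.card : ℝ) + 1) * C''.card := by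
  intro C'' hC''sub hC''cover
  have card_C : (C.card : ℝ) = (U.image asn).card := by
    rw [hC, SetCover.filter_fiber_nonempty_eq_image hasn_mem]
  have price_set : ∀ s ∈ F, ∑ e ∈ s, SetCover.price U asn e ≤ β * (Real.log U.card + 1) := by
    intro s hs
    refine SetCover.sum_price_le_mul_log_add_one (ℓ := fun e => lev (asn e)) hβ (hF s hs)
      (fun e he => ?_) fun j hj => (h2 s hs j hj).le
    exact h1 _ (hasn_mem e (hF s hs he)) ⟨e, Finset.mem_filter.2 ⟨hF s hs he, rfl⟩⟩
  have price_cover : ∑ s ∈ C'', ∑ e ∈ s, SetCover.price U asn e ≤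
      C''.card * (β * (Real.log U.card + 1)) := by
    rw [← nsmul_eq_mul]
    exact Finset.sum_le_card_nsmul _ _ _ fun s hs => price_set s (hC''sub hs)
  have card_C_le : (2 - β) * C.card ≤ C''.card * (β * (Real.log U.card + 1)) := by
    linarith [SetCover.card_image_le_card_add_sum_price asn fun e he => hC''cover e (hU' he)]
  calc (C'.card : ℝ) ≤ β * C.card := hC'size
    _ ≤ β * (C''.card * (β * (Real.log U.card + 1)) / (2 - β)) := by
      gcongr
      rwa [le_div_iff₀' (sub_pos.2 hβ2)]
    _ = β ^ 2 / (2 - β) * (Real.log U.card + 1) * C''.card := by ring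
end

section
/- Let β > 1, let U be a finite universe of n ≥ 1 elements, let F be a finite family of subsets of U, and let lev assign a natural-number level lev(e) to each element e ∈ U such that for every s ∈ F and every natural number j ≤ log_β n one has |{e ∈ s : lev(e) < j}| < β^{j+1}. Fix s ∈ F with |s| = x and enumerate its elements e_1, …, e_x so that lev(e_1) ≥ lev(e_2) ≥ … ≥ lev(e_x). Then for every index j ∈ {1, …, x}, β^{-lev(e_j)} ≤ β²/(x - j + 1). -/
/-! The elements `e j, e (j + 1), …` all lie in `s` and have level less than `lev (e j) + 1`, so
the no-positive-dirty property at that threshold bounds their number `x - j` by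
`β ^ (lev (e j) + 2)`. For a threshold `k > log_β n` the property says nothing, but none is needed:
then already `|s| ≤ n < β ^ k`. -/

/-- The set `s` is not `k`-positive-dirty, i.e. has fewer than `β ^ (k + 1)` elements of level
below `k`, for every natural `k ≤ log_β n`. Here `n` stands for the size of the universe; it is
real so that the notion does not mention the universe itself. -/
def NotPositiveDirty {α : Type*} (β n : ℝ) (lev : α → ℕ) (s : Finset α) : Prop :=
  ∀ k : ℕ, (k : ℝ) ≤ Real.logb β n → ((s.filter fun a => lev a < k).card : ℝ) < β ^ (k + 1)

theorem NotPositiveDirty.card_filter_lt_lt_pow {α : Type*} {β n : ℝ} {lev : α → ℕ} {s : Finset α}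
    (h : NotPositiveDirty β n lev s) (hβ : 1 < β) (hn : 0 < n) (hsn : (s.card : ℝ) ≤ n) (k : ℕ) :
    ((s.filter fun a => lev a < k).card : ℝ) < β ^ (k + 1) := by
  rcases le_or_gt (k : ℝ) (Real.logb β n) with hk | hk
  · exact h k hk
  · have hn_lt : n < β ^ k := by
      rwa [Real.logb_lt_iff_lt_rpow hβ hn, Real.rpow_natCast] at hk
    calc ((s.filter fun a => lev a < k).card : ℝ)
        ≤ s.card := mod_cast s.card_filter_le _
      _ ≤ n := hsn
      _ < β ^ k := hn_lt
      _ < β ^ (k + 1) := pow_lt_pow_right₀ hβ k.lt_succ_self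

theorem card_Ici_le_card_filter_le_of_antitone {ι α γ : Type*} [Preorder ι]
    [LocallyFiniteOrderTop ι] [Preorder γ] [DecidableLE γ] {s : Finset α} {e : ι → α} {f : α → γ}
    (hf : Antitone (f ∘ e)) (he : ∀ i, e i ∈ s) (hinj : Function.Injective e) (j : ι) :
    (Finset.Ici j).card ≤ (s.filter fun a => f a ≤ f (e j)).card :=
  Finset.card_le_card_of_injOn e
    (fun i hi => Finset.mem_filter.2 ⟨he i, hf (Finset.mem_Ici.1 hi)⟩) hinj.injOn

theorem zpow_neg_natCast_le_pow_div_iff {K : Type*} [Field K] [LinearOrder K]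
    [IsStrictOrderedRing K] {b c : K} (hb : 0 < b) (hc : 0 < c) (k m : ℕ) :
    b ^ (-(k : ℤ)) ≤ b ^ m / c ↔ c ≤ b ^ (k + m) := by
  rw [le_div_iff₀ hc, zpow_neg, zpow_natCast, inv_mul_le_iff₀ (pow_pos hb k), pow_add]

/-- Let `β > 1`, `U` a finite universe of `n ≥ 1` elements, `F` a finite
family of subsets of `U`, and `lev : α → ℕ` a level function such that for every `s ∈ F`
and every natural `j ≤ log_β n`, `|{e ∈ s : lev e < j}| < β ^ (j + 1)` (the relaxed
no-PD property). Fix `s ∈ F` with `|s| = x` and enumerate its elements `e₀, …, e_{x-1}`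
(0-indexed) with levels non-increasing. Then for every index `j`,
`β ^ (-lev (e j)) ≤ β² / (x - j)` (with 0-indexing, `x - j` equals the 1-indexed
`x - j + 1`). -/
theorem stmt_8 {α : Type*} [DecidableEq α] (β : ℝ) (hβ : 1 < β)
    (U : Finset α) (F : Finset (Finset α)) (hn : 1 ≤ U.card)
    (hF : ∀ s ∈ F, s ⊆ U)
    (lev : α → ℕ)
    (h2 : ∀ s ∈ F, ∀ j : ℕ, (j : ℝ) ≤ Real.logb β (U.card : ℝ) →
      ((s.filter (fun e => lev e < j)).card : ℝ) < β ^ (j + 1))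
    (s : Finset α) (hs : s ∈ F)
    (e : Fin s.card → α) (he : ∀ i, e i ∈ s) (hinj : Function.Injective e)
    (hsorted : ∀ i i' : Fin s.card, i ≤ i' → lev (e i') ≤ lev (e i)) :
    ∀ j : Fin s.card, β ^ (-(lev (e j) : ℤ)) ≤ β ^ 2 / ((s.card : ℝ) - (j : ℕ)) := by
  intro j
  have hclean : NotPositiveDirty β U.card lev s := h2 s hs
  have hj : (0 : ℝ) < (s.card : ℝ) - (j : ℕ) := sub_pos.2 (mod_cast j.isLt)
  refine (zpow_neg_natCast_le_pow_div_iff (zero_lt_one.trans hβ) hj _ _).2 ?_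
  have htail : s.card - (j : ℕ) ≤ (s.filter fun a => lev a < lev (e j) + 1).card := by
    simpa only [Fin.card_Ici, Nat.lt_succ_iff] using
      card_Ici_le_card_filter_le_of_antitone (f := lev) hsorted he hinj j
  calc (s.card : ℝ) - (j : ℕ)
      = ((s.card - (j : ℕ) : ℕ) : ℝ) := (Nat.cast_sub j.isLt.le).symm
    _ ≤ (s.filter fun a => lev a < lev (e j) + 1).card := mod_cast htail
    _ ≤ β ^ (lev (e j) + 2) :=
      (hclean.card_filter_lt_lt_pow hβ (mod_cast hn)
        (mod_cast Finset.card_le_card (hF s hs)) _).le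
end

section
/- Let 1 < β < 2, let U be a finite universe, let F be a finite family of subsets of U, let asn assign each element e ∈ U to a set asn(e) ∈ F containing it, with cov(s) = {e ∈ U : asn(e) = s}, and let each set s with cov(s) ≠ ∅ carry a natural-number level lev(s) ≥ 0, with lev(e) = lev(asn(e)) for each e ∈ U. Assume |cov(s)| ≥ β^{lev(s)} for every s with cov(s) ≠ ∅, let C = {s ∈ F : cov(s) ≠ ∅}, and let D ⊂ U with |D| ≤ (β - 1)·|C|. Then Σ_{e ∈ U \ D} β^{-lev(e)} ≥ (2 - β)·|C|. -/
/-!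
Give `e` the weight `β ^ (-lev e)`. Each nonempty block `cov s` has total weight
`|cov s| / β ^ lev s ≥ 1`, so `U` has total weight at least the number `|C|` of nonempty blocks.
Every single weight is at most `1`, so deleting `D` loses at most `|D|`.
-/

section WeightedFibers

open Finset

variable {α ι R : Type*} [DecidableEq ι]

theorem filter_fiber_nonempty_eq_image {U : Finset α} {F : Finset ι} {f : α → ι}
    (hf : ∀ e ∈ U, f e ∈ F) : {i ∈ F | {e ∈ U | f e = i}.Nonempty} = U.image f := by
  simp only [fiber_nonempty_iff_mem_image, filter_mem_eq_inter]
  exact inter_eq_right.mpr (image_subset_iff.mpr hf)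

theorem card_image_le_sum_of_one_le_fiber_weight [Semiring R] [PartialOrder R] [IsOrderedRing R]
    {U : Finset α} {f : α → ι} {w : ι → R}
    (hw : ∀ e ∈ U, 1 ≤ #{x ∈ U | f x = f e} • w (f e)) :
    (#(U.image f) : R) ≤ ∑ e ∈ U, w (f e) := by
  rw [sum_comp, cast_card]
  exact sum_le_sum (forall_mem_image.mpr hw)

theorem sum_sub_card_le_sum_sdiff [DecidableEq α] [Ring R] [PartialOrder R] [IsOrderedRing R]
    {U D : Finset α} {q : α → R} (hq : ∀ e ∈ U ∩ D, q e ≤ 1) :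
    ∑ e ∈ U, q e - #D ≤ ∑ e ∈ U \ D, q e := by
  have hUD : ∑ e ∈ U ∩ D, q e ≤ #D :=
    calc ∑ e ∈ U ∩ D, q e ≤ #(U ∩ D) := by
          simpa only [nsmul_one] using sum_le_card_nsmul _ _ _ hq
      _ ≤ #D := by gcongr; exact inter_subset_right
  rw [← sum_inter_add_sum_sdiff U D, sub_le_iff_le_add']
  gcongr

theorem stmt_11_general [DecidableEq α] [Field R] [LinearOrder R] [IsStrictOrderedRing R] {β : R}
    (hβ : 1 ≤ β) {U : Finset α} {asn : α → ι} {lev : ι → ℕ}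
    (hlev : ∀ e ∈ U, β ^ lev (asn e) ≤ #{x ∈ U | asn x = asn e}) (D : Finset α) :
    (#(U.image asn) : R) - #D ≤ ∑ e ∈ U \ D, β ^ (-(lev (asn e) : ℤ)) := by
  have hfiber : ∀ e ∈ U, 1 ≤ #{x ∈ U | asn x = asn e} • β ^ (-(lev (asn e) : ℤ)) := by
    intro e he
    rw [nsmul_eq_mul, zpow_neg, zpow_natCast, ← div_eq_mul_inv, one_le_div (by positivity)]
    exact hlev e he
  have hle_one : ∀ e ∈ U ∩ D, β ^ (-(lev (asn e) : ℤ)) ≤ 1 :=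
    fun e _ ↦ zpow_le_one_of_nonpos₀ hβ (by simp)
  calc (#(U.image asn) : R) - #D ≤ ∑ e ∈ U, β ^ (-(lev (asn e) : ℤ)) - #D := by
        gcongr
        exact card_image_le_sum_of_one_le_fiber_weight (w := fun s ↦ β ^ (-(lev s : ℤ))) hfiber
    _ ≤ _ := sum_sub_card_le_sum_sdiff hle_one

end WeightedFibers

/-- Let `1 < β < 2`, `U` a finite universe, `F` a finite family of
subsets of `U`, `asn` an assignment of each `e ∈ U` to a set `asn e ∈ F` containing it,
with `cov s = {e ∈ U : asn e = s}`, and each set `s` with `cov s ≠ ∅` carrying a natural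
level `lev s ≥ 0`, with `lev e = lev (asn e)`. Assume `|cov s| ≥ β ^ lev s` for every
`s` with `cov s ≠ ∅`, let `C = {s ∈ F : cov s ≠ ∅}`, and let `D ⊂ U` with
`|D| ≤ (β - 1)·|C|`. Then `∑_{e ∈ U \ D} β ^ (-lev e) ≥ (2 - β)·|C|`. -/
theorem stmt_11 {α : Type*} [DecidableEq α] (β : ℝ) (hβ : 1 < β) (hβ2 : β < 2)
    (U : Finset α) (F : Finset (Finset α))
    (hF : ∀ s ∈ F, s ⊆ U)
    (asn : α → Finset α)
    (hasn_mem : ∀ e ∈ U, asn e ∈ F) (hasn_in : ∀ e ∈ U, e ∈ asn e)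
    (lev : Finset α → ℕ)
    (h1 : ∀ s ∈ F, (U.filter (fun e => asn e = s)).Nonempty →
      β ^ (lev s) ≤ ((U.filter (fun e => asn e = s)).card : ℝ))
    (C : Finset (Finset α))
    (hC : C = F.filter (fun s => (U.filter (fun e => asn e = s)).Nonempty))
    (D : Finset α) (hD : D ⊂ U) (hDcard : (D.card : ℝ) ≤ (β - 1) * C.card) :
    (2 - β) * C.card ≤ ∑ e ∈ U \ D, β ^ (-(lev (asn e) : ℤ)) := by
  rw [hC, filter_fiber_nonempty_eq_image hasn_mem] at hDcard ⊢
  linarith [stmt_11_general hβ.le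
    (fun e he ↦ h1 (asn e) (hasn_mem e he) ⟨e, Finset.mem_filter.mpr ⟨he, rfl⟩⟩) D]
end
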